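/- Let B be a bipartite graph with a perfect matching, let a1, a2 ∈ V1 and b1, b2 ∈ V2 be four distinct vertices, S = {a1, a2, b1, b2}, and let F = {a1b2, a2b1} ⊆ E(B) be an extendible S-cover. Let B⁺ be the graph obtained from B by adding two new vertices x and y (with x placed in V1 and y in V2) together with the edges xy, xb1, xb2, ya1, ya2, and let C be the 4-cycle of B⁺ with vertices a1, y, x, b2 (edges a1y, yx, xb2, b2a1). Then B is an F-instance of 2-MLP for (a1, a2) and (b1, b2) if and only if there exists a conformal cross over C in B⁺. -/

import Mathlib

namespace Paper

open SimpleGraph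

variable {V : Type*} {W : Type*}

/-- `M` is a perfect matching of the vertex set `S` in the graph `G`:
a set of pairwise disjoint edges of `G`, all within `S`, covering every vertex of `S`. -/
def IsPMOn (G : SimpleGraph V) (S : Set V) (M : Set (Sym2 V)) : Prop :=
  (∀ e ∈ M, e ∈ G.edgeSet) ∧ (∀ e ∈ M, ∀ v ∈ e, v ∈ S) ∧
    ∀ v ∈ S, ∃! e, e ∈ M ∧ v ∈ e

/-- `M` is a perfect matching of `G`. -/
def IsPM (G : SimpleGraph V) (M : Set (Sym2 V)) : Prop :=
  IsPMOn G Set.univ M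

/-- The edges in `F` are pairwise vertex-disjoint. -/
def PairwiseDisjointEdges (F : Set (Sym2 V)) : Prop :=
  ∀ e ∈ F, ∀ f ∈ F, e ≠ f → ∀ x : V, x ∈ e → x ∉ f

/-- All edges of `G` have both endpoints in `S`. -/
def EdgesWithin (G : SimpleGraph V) (S : Set V) : Prop :=
  ∀ ⦃x y : V⦄, G.Adj x y → x ∈ S ∧ y ∈ S

def ConnectedOn (G : SimpleGraph V) (S : Set V) : Prop :=
  S.Nonempty ∧ ∀ x ∈ S, ∀ y ∈ S, G.Reachable x y

/-- The graph `G` with vertex set `S` is a brace: it is connected and every matching of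
size at most two extends to a perfect matching. -/
def IsBraceOn (G : SimpleGraph V) (S : Set V) : Prop :=
  EdgesWithin G S ∧ ConnectedOn G S ∧
    ∀ F : Set (Sym2 V), F ⊆ G.edgeSet → PairwiseDisjointEdges F → F.ncard ≤ 2 →
      ∃ M, IsPMOn G S M ∧ F ⊆ M

def IsBrace (G : SimpleGraph V) : Prop :=
  IsBraceOn G Set.univ

def IsBipartitionOf (G : SimpleGraph V) (V1 V2 : Set V) : Prop :=
  Disjoint V1 V2 ∧ V1 ∪ V2 = Set.univ ∧ ∀ ⦃x y : V⦄, G.Adj x y → (x ∈ V1 ↔ y ∈ V2)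

def IsBipartite (G : SimpleGraph V) : Prop :=
  ∃ V1 V2 : Set V, IsBipartitionOf G V1 V2

def MatchingCoveredOn (G : SimpleGraph V) (S : Set V) : Prop :=
  EdgesWithin G S ∧ ConnectedOn G S ∧ ∀ e ∈ G.edgeSet, ∃ M, IsPMOn G S M ∧ e ∈ M

def MatchingCovered (G : SimpleGraph V) : Prop :=
  MatchingCoveredOn G Set.univ

/-- Every vertex of `A` is covered exactly once by an edge of `M ∩ Es`;
i.e. `M ∩ Es` is a perfect matching of the subgraph with vertex set `A` and edge set `Es`. -/
def MatchesExactly (M Es : Set (Sym2 V)) (A : Set V) : Prop :=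
  ∀ v ∈ A, ∃! e, e ∈ M ∧ e ∈ Es ∧ v ∈ e

/-- `M` restricted to the edges of `P` with both endpoints in `A` is a
perfect matching of `A`; i.e. `M ∩ E(P ∩ A)` is a perfect matching of `P ∩ A`. -/
def WalkMConfOn (G : SimpleGraph V) (M : Set (Sym2 V)) {u v : V} (P : G.Walk u v)
    (A : Set V) : Prop :=
  ∀ x ∈ A, ∃! e : Sym2 V, e ∈ M ∧ e ∈ P.edges ∧ (∀ y ∈ e, y ∈ A) ∧ x ∈ e

/-- The path `P` is `M`-conformal: `M ∩ E(P)` is a perfect matching of `P`. -/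
def MConformalWalk (G : SimpleGraph V) (M : Set (Sym2 V)) {u v : V} (P : G.Walk u v) : Prop :=
  WalkMConfOn G M P {x | x ∈ P.support}

/-- The path `P` is internally `M`-conformal: removing both endpoints leaves
an `M`-conformal path. -/
def InternallyMConformal (G : SimpleGraph V) (M : Set (Sym2 V)) {u v : V}
    (P : G.Walk u v) : Prop :=
  WalkMConfOn G M P {x | x ∈ P.support ∧ x ≠ u ∧ x ≠ v}

/-- The path `P` is `M`-alternating: there is a set `S` of endpoints of `P`
such that `P − S` is `M`-conformal. -/
def MAlternating (G : SimpleGraph V) (M : Set (Sym2 V)) {u v : V} (P : G.Walk u v) : Prop :=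
  ∃ S ⊆ ({u, v} : Set V), WalkMConfOn G M P {x | x ∈ P.support ∧ x ∉ S}

/-- The cycle `C` is `M`-conformal: `M ∩ E(C)` is a perfect matching of `C`. -/
def MConformalCycle (G : SimpleGraph V) (M : Set (Sym2 V)) {c : V} (C : G.Walk c c) : Prop :=
  ∀ x ∈ C.support, ∃! e, e ∈ M ∧ e ∈ C.edges ∧ x ∈ e

/-- The cycle `C` is conformal in the graph `G` with vertex set `S`:
`G − V(C)` has a perfect matching. -/
def ConformalCycleOn (G : SimpleGraph V) (S : Set V) {c : V} (C : G.Walk c c) : Prop :=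
  ∃ M, IsPMOn G (S \ {x | x ∈ C.support}) M

def ConformalCycle (G : SimpleGraph V) {c : V} (C : G.Walk c c) : Prop :=
  ConformalCycleOn G Set.univ C

/-- The four vertices appear on the cycle `C` in the listed cyclic order. -/
def InCyclicOrder (G : SimpleGraph V) {c : V} (C : G.Walk c c) (s1 s2 t1 t2 : V) : Prop :=
  ∃ n : ℕ, List.Sublist [s1, s2, t1, t2] (C.support.tail.rotate n) ∨
    List.Sublist [s1, s2, t1, t2] (C.support.tail.reverse.rotate n)

/-- The paths `P1` (from `s1` to `t1`) and `P2` (from `s2` to `t2`) form a matching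
cross over the cycle `C` with respect to the perfect matching `M` of `(G, S)`. -/
def IsMatchingCrossOn (G : SimpleGraph V) (S : Set V) {c s1 t1 s2 t2 : V}
    (C : G.Walk c c) (M : Set (Sym2 V)) (P1 : G.Walk s1 t1) (P2 : G.Walk s2 t2) : Prop :=
  IsPMOn G S M ∧ [s1, s2, t1, t2].Nodup ∧ InCyclicOrder G C s1 s2 t1 t2 ∧
    P1.IsPath ∧ P2.IsPath ∧ MAlternating G M P1 ∧ MAlternating G M P2 ∧
    (∀ x : V, x ∈ P1.support → x ∉ P2.support) ∧
    (∀ x ∈ P1.support, x ≠ s1 → x ≠ t1 → x ∉ C.support) ∧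
    (∀ x ∈ P2.support, x ≠ s2 → x ≠ t2 → x ∉ C.support)

def HasMatchingCrossOn (G : SimpleGraph V) (S : Set V) {c : V} (C : G.Walk c c) : Prop :=
  ∃ (M : Set (Sym2 V)) (s1 t1 s2 t2 : V) (P1 : G.Walk s1 t1) (P2 : G.Walk s2 t2),
    IsMatchingCrossOn G S C M P1 P2

def HasMatchingCross (G : SimpleGraph V) {c : V} (C : G.Walk c c) : Prop :=
  HasMatchingCrossOn G Set.univ C

/-- `C + P1 + P2` is a conformal subgraph of `(G, S)`. -/
def CrossConformalOn (G : SimpleGraph V) (S : Set V) {c s1 t1 s2 t2 : V}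
    (C : G.Walk c c) (P1 : G.Walk s1 t1) (P2 : G.Walk s2 t2) : Prop :=
  ∃ N, IsPMOn G S N ∧
    MatchesExactly N
      ({f | f ∈ C.edges} ∪ {f | f ∈ P1.edges} ∪ {f | f ∈ P2.edges})
      ({x | x ∈ C.support} ∪ {x | x ∈ P1.support} ∪ {x | x ∈ P2.support})

/-- There is a conformal cross over the cycle `C` in `G`. -/
def HasConformalCross (G : SimpleGraph V) {c : V} (C : G.Walk c c) : Prop :=
  ∃ (M : Set (Sym2 V)) (s1 t1 s2 t2 : V) (P1 : G.Walk s1 t1) (P2 : G.Walk s2 t2),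
    IsMatchingCrossOn G Set.univ C M P1 P2 ∧ CrossConformalOn G Set.univ C P1 P2

/-- A bisubdivision of the graph `H` inside the graph `G`: every edge of `H` is replaced
by a path of odd length (i.e., subdivided an even number of times), and those paths
pairwise meet only in branch vertices. -/
structure Bisubdivision (H : SimpleGraph W) (G : SimpleGraph V) where
  bv : W → V
  bv_inj : Function.Injective bv
  link : ∀ ⦃x y : W⦄, H.Adj x y → G.Walk (bv x) (bv y)
  link_isPath : ∀ ⦃x y : W⦄ (h : H.Adj x y), (link h).IsPath
  link_odd : ∀ ⦃x y : W⦄ (h : H.Adj x y), Odd (link h).length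
  link_symm : ∀ ⦃x y : W⦄ (h : H.Adj x y), link h.symm = (link h).reverse
  link_branch : ∀ ⦃x y : W⦄ (h : H.Adj x y) (z : W), bv z ∈ (link h).support → z = x ∨ z = y
  link_meet : ∀ ⦃x y x' y' : W⦄ (h : H.Adj x y) (h' : H.Adj x' y'), s(x, y) ≠ s(x', y') →
    ∀ v : V, v ∈ (link h).support → v ∈ (link h').support →
      (v = bv x ∨ v = bv y) ∧ (v = bv x' ∨ v = bv y')

def Bisubdivision.verts {H : SimpleGraph W} {G : SimpleGraph V}
    (L : Bisubdivision H G) : Set V :=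
  {v | ∃ (x y : W) (h : H.Adj x y), v ∈ (L.link h).support}

def Bisubdivision.edgeSet {H : SimpleGraph W} {G : SimpleGraph V}
    (L : Bisubdivision H G) : Set (Sym2 V) :=
  {e | ∃ (x y : W) (h : H.Adj x y), e ∈ (L.link h).edges}

/-- The bisubdivision `L` is an `M`-conformal subgraph of `G`. -/
def Bisubdivision.MConformal {H : SimpleGraph W} {G : SimpleGraph V}
    (L : Bisubdivision H G) (M : Set (Sym2 V)) : Prop :=
  MatchesExactly M L.edgeSet L.verts

/-- The bisubdivision `L` is a conformal subgraph of `(G, S)`. -/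
def Bisubdivision.ConformalOn {H : SimpleGraph W} {G : SimpleGraph V}
    (L : Bisubdivision H G) (S : Set V) : Prop :=
  ∃ M, IsPMOn G S M ∧ L.MConformal M

abbrev K33 : SimpleGraph (Fin 3 ⊕ Fin 3) := completeBipartiteGraph (Fin 3) (Fin 3)

/-- `G` contains a conformal bisubdivision of `K_{3,3}`. -/
def ContainsK33 (G : SimpleGraph V) : Prop :=
  ∃ L : Bisubdivision K33 G, L.ConformalOn Set.univ

def K33Free (G : SimpleGraph V) : Prop :=
  ¬ ContainsK33 G

def C4verts (a1 b1 a2 b2 : V) : Set V := {a1, b1, a2, b2}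

def C4edges (a1 b1 a2 b2 : V) : Set (Sym2 V) := {s(a1, b1), s(b1, a2), s(a2, b2), s(b2, a1)}

/-- `a1 b1 a2 b2` is a cycle of length four in `G`. -/
def IsC4In (G : SimpleGraph V) (a1 b1 a2 b2 : V) : Prop :=
  [a1, b1, a2, b2].Nodup ∧ G.Adj a1 b1 ∧ G.Adj b1 a2 ∧ G.Adj a2 b2 ∧ G.Adj b2 a1

/-- `B` is a 4-cycle sum of the graphs `Bi i` (with vertex sets `Si i`)
at the common conformal 4-cycle `a1 b1 a2 b2`. -/
def IsFourCycleSum {ℓ : ℕ} (B : SimpleGraph V) (Bi : Fin ℓ → SimpleGraph V)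
    (Si : Fin ℓ → Set V) (a1 b1 a2 b2 : V) : Prop :=
  (∀ i, EdgesWithin (Bi i) (Si i)) ∧
  (∀ i, IsC4In (Bi i) a1 b1 a2 b2) ∧
  (∀ i, ∃ M, IsPMOn (Bi i) (Si i \ C4verts a1 b1 a2 b2) M) ∧
  (∀ i j, i ≠ j → Si i ∩ Si j = C4verts a1 b1 a2 b2) ∧
  (⋃ i, Si i) = Set.univ ∧
  ∃ D ⊆ C4edges a1 b1 a2 b2, B.edgeSet = (⋃ i, (Bi i).edgeSet) \ D

/-- `B` is a maximal 4-cycle sum of the braces `Bi i` at the 4-cycle `a1 b1 a2 b2`. -/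
def IsMaxFourCycleSumOfBraces {ℓ : ℕ} (B : SimpleGraph V) (Bi : Fin ℓ → SimpleGraph V)
    (Si : Fin ℓ → Set V) (a1 b1 a2 b2 : V) : Prop :=
  IsFourCycleSum B Bi Si a1 b1 a2 b2 ∧ (∀ i, IsBraceOn (Bi i) (Si i)) ∧
    ¬ ∃ ℓ' : ℕ, ℓ < ℓ' ∧ ∃ (Hi : Fin ℓ' → SimpleGraph V) (Ti : Fin ℓ' → Set V),
      IsFourCycleSum B Hi Ti a1 b1 a2 b2 ∧ ∀ i, IsBraceOn (Hi i) (Ti i)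

/-- `∂(X)`: the set of edges of `G` with exactly one endpoint in `X`. -/
def edgeCut (G : SimpleGraph V) (X : Set V) : Set (Sym2 V) :=
  {e | e ∈ G.edgeSet ∧ ∃ x y : V, e = s(x, y) ∧ x ∈ X ∧ y ∉ X}

/-- `∂(X)` is a tight cut of the graph `G` with vertex set `S`. -/
def IsTightCutOn (G : SimpleGraph V) (S X : Set V) : Prop :=
  ∀ M, IsPMOn G S M → (edgeCut G X ∩ M).ncard = 1

def IsTightCut (G : SimpleGraph V) (X : Set V) : Prop :=
  IsTightCutOn G Set.univ X

/-- The minority of `X` with respect to the colour classes `V1`, `V2`. -/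
noncomputable def minority (V1 V2 X : Set V) : Set V :=
  if (X ∩ V1).ncard < (X ∩ V2).ncard then X ∩ V1 else X ∩ V2

/-- `P1` and `P2` are `M`-alternating paths of the same type. -/
def SameType (G : SimpleGraph V) (M : Set (Sym2 V)) {s1 t1 s2 t2 : V}
    (P1 : G.Walk s1 t1) (P2 : G.Walk s2 t2) : Prop :=
  (InternallyMConformal G M P1 ∧ InternallyMConformal G M P2) ∨
  (MConformalWalk G M P1 ∧ MConformalWalk G M P2) ∨
  ((¬ InternallyMConformal G M P1 ∧ ¬ MConformalWalk G M P1) ∧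
    (¬ InternallyMConformal G M P2 ∧ ¬ MConformalWalk G M P2))

/-- There is a strong matching cross over `C` in `(G, S)` w.r.t. colour classes `V1, V2`. -/
def HasStrongMatchingCrossOn (G : SimpleGraph V) (S V1 V2 : Set V) {c : V}
    (C : G.Walk c c) : Prop :=
  ∃ (M : Set (Sym2 V)) (s1 t1 s2 t2 : V) (P1 : G.Walk s1 t1) (P2 : G.Walk s2 t2),
    IsMatchingCrossOn G S C M P1 P2 ∧
    (V1 ∩ {s1, s2, t1, t2}).ncard = (V2 ∩ {s1, s2, t1, t2}).ncard ∧
    SameType G M P1 P2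

/-- `s1 s2 t1 t2` appear in this cyclic order on the 4-cycle `a1 b1 a2 b2`. -/
def CyclicOrderC4 (a1 b1 a2 b2 s1 s2 t1 t2 : V) : Prop :=
  ∃ n : ℕ, [s1, s2, t1, t2] = [a1, b1, a2, b2].rotate n ∨
    [s1, s2, t1, t2] = [b2, a2, b1, a1].rotate n

/-- `P1, P2` form a matching cross over the 4-cycle `a1 b1 a2 b2` w.r.t. `M`. -/
def IsCrossOverC4 (G : SimpleGraph V) (M : Set (Sym2 V)) (a1 b1 a2 b2 : V)
    {s1 t1 s2 t2 : V} (P1 : G.Walk s1 t1) (P2 : G.Walk s2 t2) : Prop :=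
  [s1, s2, t1, t2].Nodup ∧ CyclicOrderC4 a1 b1 a2 b2 s1 s2 t1 t2 ∧
    P1.IsPath ∧ P2.IsPath ∧ MAlternating G M P1 ∧ MAlternating G M P2 ∧
    (∀ z : V, z ∈ P1.support → z ∉ P2.support) ∧
    (∀ z ∈ P1.support, z ≠ s1 → z ≠ t1 → z ∉ C4verts a1 b1 a2 b2) ∧
    (∀ z ∈ P2.support, z ≠ s2 → z ≠ t2 → z ∉ C4verts a1 b1 a2 b2)

/-- The Heawood graph on `ZMod 14`. -/
def heawood : SimpleGraph (ZMod 14) :=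
  SimpleGraph.fromRel fun i j => j = i + 1 ∨ (Even i.val ∧ j = i + 5)

/-- The Rotunda: three cubes glued along a common 4-cycle whose edges are then deleted. -/
def rotunda : SimpleGraph (Fin 4 ⊕ Fin 3 × Fin 4) :=
  SimpleGraph.fromRel fun x y =>
    match x, y with
    | Sum.inl j, Sum.inr p => j = p.2
    | Sum.inr p, Sum.inr q => p.1 = q.1 ∧ q.2 = p.2 + 1
    | _, _ => False

/-- `F` is an `S`-cover in `G`. -/
def IsSCover (G : SimpleGraph V) (S : Set V) (F : Set (Sym2 V)) : Prop :=
  F ⊆ G.edgeSet ∧ (∀ e ∈ F, ∃ v ∈ S, v ∈ e) ∧ ∀ v ∈ S, ∃ e ∈ F, v ∈ e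

/-- `F` is contained in some perfect matching of `G`. -/
def Extendible (G : SimpleGraph V) (F : Set (Sym2 V)) : Prop :=
  ∃ M, IsPM G M ∧ F ⊆ M

/-- `(G, S)` is an `F`-instance of 2-MLP for `(a1, a2)` and `(b1, b2)`. -/
def TwoMLPInstanceOn (G : SimpleGraph V) (S : Set V) (a1 a2 b1 b2 : V)
    (F : Set (Sym2 V)) : Prop :=
  ∃ M, IsPMOn G S M ∧ F ⊆ M ∧
    ∃ (P1 : G.Walk a1 b1) (P2 : G.Walk a2 b2), P1.IsPath ∧ P2.IsPath ∧
      InternallyMConformal G M P1 ∧ InternallyMConformal G M P2 ∧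
      ∀ x : V, x ∈ P1.support → x ∉ P2.support

/-- `B − u − v + pq`: delete the vertices `u, v` and add the edge `pq`. -/
def deleteAdd (B : SimpleGraph V) (u v p q : V) : SimpleGraph V :=
  SimpleGraph.fromRel fun x y =>
    (B.Adj x y ∨ (x = p ∧ y = q)) ∧ x ≠ u ∧ x ≠ v ∧ y ≠ u ∧ y ≠ v

/-- `B` plus two new vertices `x = Sum.inr 0` and `y = Sum.inr 1` together with
the edges `xy, x b1, x b2, y a1, y a2`. -/
def plusXY (B : SimpleGraph V) (a1 a2 b1 b2 : V) : SimpleGraph (V ⊕ Fin 2) :=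
  SimpleGraph.fromRel fun p q =>
    (∃ a b : V, p = Sum.inl a ∧ q = Sum.inl b ∧ B.Adj a b) ∨
    (p = Sum.inr 0 ∧ q = Sum.inr 1) ∨
    (p = Sum.inr 0 ∧ (q = Sum.inl b1 ∨ q = Sum.inl b2)) ∨
    (p = Sum.inr 1 ∧ (q = Sum.inl a1 ∨ q = Sum.inl a2))

/-- The endpoints `q1, q2` (on the 4-cycle) belong to the same colour class. -/
def PrecrossDaring (V1 V2 : Set V) (q1 q2 : V) : Prop :=
  (q1 ∈ V1 ∧ q2 ∈ V1) ∨ (q1 ∈ V2 ∧ q2 ∈ V2)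

/-- `(P1, P2, Q, M)` is a diffuse `C'`-`M`-precross through the 4-cycle `a1 b1 a2 b2`
in the graph `G` with vertex set `S` and colour classes `V1, V2`. -/
def DiffusePrecross (G : SimpleGraph V) (S V1 V2 : Set V) (a1 b1 a2 b2 : V)
    {c p1 q1 p2 q2 x1 x2 : V} (C' : G.Walk c c) (M : Set (Sym2 V))
    (P1 : G.Walk p1 q1) (P2 : G.Walk p2 q2) (Q : G.Walk x1 x2) : Prop :=
  IsPMOn G S M ∧ P1.IsPath ∧ P2.IsPath ∧ Q.IsPath ∧
  MAlternating G M P1 ∧ MAlternating G M P2 ∧ MAlternating G M Q ∧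
  (∀ z : V, z ∈ P1.support → z ∉ P2.support) ∧
  (∀ z : V, z ∈ P1.support → z ∉ Q.support) ∧
  (∀ z : V, z ∈ P2.support → z ∉ Q.support) ∧
  (∀ z ∈ P1.support, z ≠ p1 → z ≠ q1 → z ∉ C'.support) ∧
  (∀ z ∈ P2.support, z ≠ p2 → z ≠ q2 → z ∉ C'.support) ∧
  (∀ z ∈ Q.support, z ≠ x1 → z ≠ x2 → z ∉ C'.support) ∧
  x1 ∈ C'.support ∧ x2 ∈ C'.support ∧
  p1 ∈ C'.support ∧ q1 ∈ C4verts a1 b1 a2 b2 ∧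
  p2 ∈ C'.support ∧ q2 ∈ C4verts a1 b1 a2 b2 ∧
  (∀ Wk : G.Walk p1 p2, (∀ e ∈ Wk.edges, e ∈ C'.edges) → ∃ z ∈ Wk.support, z ∈ Q.support) ∧
  (∀ U ∈ ({V1, V2} : Set (Set V)), (q1 ∈ U ∨ q2 ∈ U) →
    ∃ q : V, (q = q1 ∨ q = q2) ∧ q ∈ U ∧ ∃ e ∈ M, e ∈ C4edges a1 b1 a2 b2 ∧ q ∈ e)

/-- A daring diffuse precross is successful. -/
def PrecrossSuccessful (G : SimpleGraph V) (V1 V2 : Set V) (M : Set (Sym2 V))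
    {p1 q1 p2 q2 : V} (P1 : G.Walk p1 q1) (P2 : G.Walk p2 q2) : Prop :=
  PrecrossDaring V1 V2 q1 q2 ∧
  ((InternallyMConformal G M P1 ∧ MConformalWalk G M P2) ∨
   (InternallyMConformal G M P2 ∧ MConformalWalk G M P1) ∨
   (Even P1.length ∧ Even P2.length ∧
     ((∃ e ∈ M, e ∈ P1.edges ∧ p1 ∈ e) ↔ ¬ ∃ e ∈ M, e ∈ P2.edges ∧ p2 ∈ e)))

/-!
Both sides amount to one condition that prescribes no matching on the paths: `B` has vertex-disjoint
paths from `a1` to `b1` and from `a2` to `b2` whose removal leaves a graph with a perfect matching.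

For 2-MLP, the ends of such paths are matched by `F`, and since `B` is bipartite the paths are odd,
so their interiors have perfect matchings along the paths.

For the cross, the four vertices of `C` have to be the ends of the two paths, so the paths join
opposite vertices of `C`: `a1` to `x` and `b2` to `y`. These paths are even, so deleting `a1` and
`b2` from them leaves paths with perfect matchings, and the edge `a1 b2` of `C` completes the
matching. As the paths are disjoint, they reach `x` from `b1` and `y` from `a2`; cutting off
`x` and `y` yields the paths in `B`, and conversely these can be extended to `x` and `y`.
-/

section PerfectMatching

variable {G : SimpleGraph V} {S T A : Set V} {M N L : Set (Sym2 V)} {u v : V} {e f : Sym2 V}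

theorem IsPMOn.eq_of_mem (hM : IsPMOn G S M) (he : e ∈ M) (hf : f ∈ M) (hve : v ∈ e)
    (hvf : v ∈ f) : e = f :=
  (hM.2.2 v (hM.2.1 e he v hve)).unique ⟨he, hve⟩ ⟨hf, hvf⟩

theorem isPMOn_empty : IsPMOn G ∅ ∅ := by
  simp [IsPMOn]

theorem isPMOn_pair (h : G.Adj u v) : IsPMOn G {u, v} {s(u, v)} := by
  refine ⟨by simpa using h, by simp, fun x hx ↦ ⟨s(u, v), ⟨rfl, by simpa using hx⟩, ?_⟩⟩
  exact fun e he ↦ he.1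

theorem IsPMOn.union (hM : IsPMOn G S M) (hN : IsPMOn G T N) (hST : Disjoint S T) :
    IsPMOn G (S ∪ T) (M ∪ N) := by
  have hM_mem := hM.2.1
  have hN_mem := hN.2.1
  rw [Set.disjoint_left] at hST
  refine ⟨fun e he ↦ he.elim (hM.1 e) (hN.1 e),
    fun e he v hv ↦ he.imp (hM_mem e · v hv) (hN_mem e · v hv), ?_⟩
  rintro v (hv | hv)
  · obtain ⟨e, ⟨he, hve⟩, he_unique⟩ := hM.2.2 v hv
    refine ⟨e, ⟨Or.inl he, hve⟩, ?_⟩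
    rintro f ⟨hf | hf, hvf⟩
    · exact he_unique f ⟨hf, hvf⟩
    · exact absurd (hN_mem f hf v hvf) (hST hv)
  · obtain ⟨e, ⟨he, hve⟩, he_unique⟩ := hN.2.2 v hv
    refine ⟨e, ⟨Or.inr he, hve⟩, ?_⟩
    rintro f ⟨hf | hf, hvf⟩
    · exact absurd hv (hST (hM_mem f hf v hvf))
    · exact he_unique f ⟨hf, hvf⟩

theorem IsPMOn.union_compl (hM : IsPMOn G Aᶜ M) (hL : IsPMOn G A L) :
    IsPMOn G Set.univ (M ∪ L) :=
  Set.compl_union_self A ▸ hM.union hL disjoint_compl_left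

theorem IsPMOn.union_of_diff_singleton {p q : V} (hL : IsPMOn G (S \ {p}) L)
    (hN : IsPMOn G (T \ {q}) N) (hpq : G.Adj p q) (hp : p ∈ S) (hq : q ∈ T)
    (hST : Disjoint S T) : IsPMOn G (S ∪ T) (L ∪ N ∪ {s(p, q)}) := by
  rw [Set.disjoint_left] at hST
  have hdisj : Disjoint (S \ {p}) (T \ {q}) := by
    simp only [Set.disjoint_left]
    grind
  have hdisj_pair : Disjoint (S \ {p} ∪ T \ {q}) {p, q} := by
    simp only [Set.disjoint_left]
    grind
  convert (hL.union hN hdisj).union (isPMOn_pair hpq) hdisj_pair using 1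
  grind

theorem IsPMOn.union_of_diff_pair {a1 a2 b1 b2 : V} (hL : IsPMOn G (S \ {a1, b1}) L)
    (hN : IsPMOn G (T \ {a2, b2}) N) (h12 : G.Adj a1 b2) (h21 : G.Adj a2 b1) (ha1 : a1 ∈ S)
    (hb1 : b1 ∈ S) (ha2 : a2 ∈ T) (hb2 : b2 ∈ T) (hST : Disjoint S T) (h1 : a1 ≠ b1)
    (h2 : a2 ≠ b2) : IsPMOn G (S ∪ T) (L ∪ N ∪ {s(a1, b2), s(a2, b1)}) := by
  rw [Set.disjoint_left] at hST
  have hdisj : Disjoint (S \ {a1, b1}) (T \ {a2, b2}) := by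
    simp only [Set.disjoint_left]
    grind
  have hdisj_edges : Disjoint ({a1, b2} : Set V) {a2, b1} := by
    simp only [Set.disjoint_left]
    grind
  have hdisj_ends : Disjoint (S \ {a1, b1} ∪ T \ {a2, b2}) ({a1, b2} ∪ {a2, b1}) := by
    simp only [Set.disjoint_left]
    grind
  have hends := (isPMOn_pair h12).union (isPMOn_pair h21) hdisj_edges
  convert (hL.union hN hdisj).union hends hdisj_ends using 1
  · grind
  · rw [Set.singleton_union]

theorem IsPMOn.diff (hM : IsPMOn G S M) (hT : ∀ v ∈ T, ∃ e ∈ M, v ∈ e ∧ ∀ w ∈ e, w ∈ T) :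
    IsPMOn G (S \ T) {e ∈ M | ∀ v ∈ e, v ∉ T} := by
  refine ⟨fun e he ↦ hM.1 e he.1, fun e he v hv ↦ ⟨hM.2.1 e he.1 v hv, he.2 v hv⟩, ?_⟩
  rintro v ⟨hvS, hvT⟩
  obtain ⟨e, ⟨he, hve⟩, he_unique⟩ := hM.2.2 v hvS
  refine ⟨e, ⟨⟨he, fun w hwe hwT ↦ hvT ?_⟩, hve⟩, fun f hf ↦ he_unique f ⟨hf.1.1, hf.2⟩⟩
  obtain ⟨f, hf, hwf, hfT⟩ := hT w hwT
  exact hfT v (hM.eq_of_mem he hf hwe hwf ▸ hve)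

theorem IsPMOn.map {H : SimpleGraph W} (hM : IsPMOn G S M) (f : G →g H)
    (hf : Function.Injective f) : IsPMOn H (f '' S) (Sym2.map f '' M) := by
  refine ⟨?_, ?_, ?_⟩
  · rintro _ ⟨e, he, rfl⟩
    exact f.map_mem_edgeSet (hM.1 e he)
  · rintro _ ⟨e, he, rfl⟩ x hx
    obtain ⟨v, hv, rfl⟩ := Sym2.mem_map.1 hx
    exact ⟨v, hM.2.1 e he v hv, rfl⟩
  · rintro _ ⟨v, hv, rfl⟩
    obtain ⟨e, ⟨he, hve⟩, he_unique⟩ := hM.2.2 v hv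
    refine ⟨Sym2.map f e, ⟨⟨e, he, rfl⟩, Sym2.mem_map.2 ⟨v, hve, rfl⟩⟩, ?_⟩
    rintro _ ⟨⟨e', he', rfl⟩, hve'⟩
    obtain ⟨w, hwe', hwv⟩ := Sym2.mem_map.1 hve'
    rw [he_unique e' ⟨he', hf hwv ▸ hwe'⟩]

theorem IsPMOn.comap {H : SimpleGraph W} {N : Set (Sym2 W)} (f : G ↪g H)
    (hN : IsPMOn H (f '' S) N) : IsPMOn G S (Sym2.map f ⁻¹' N) := by
  refine ⟨fun e he ↦ f.map_mem_edgeSet_iff.1 (hN.1 _ he), fun e he v hv ↦ ?_, fun v hv ↦ ?_⟩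
  · exact f.injective.mem_set_image.1 (hN.2.1 _ he (f v) (Sym2.mem_map.2 ⟨v, hv, rfl⟩))
  · obtain ⟨e, ⟨he, hve⟩, he_unique⟩ := hN.2.2 (f v) ⟨v, hv, rfl⟩
    obtain ⟨x, rfl⟩ := Sym2.mem_iff_exists.1 hve
    obtain ⟨w, -, rfl⟩ := hN.2.1 _ he x (Sym2.mem_mk_right _ _)
    refine ⟨s(v, w), ⟨he, Sym2.mem_mk_left _ _⟩, fun e' ⟨he', hve'⟩ ↦ ?_⟩
    exact Sym2.map.injective f.injective
      (he_unique _ ⟨he', Sym2.mem_map.2 ⟨v, hve', rfl⟩⟩)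

theorem IsPMOn.matchesExactly {Es : Set (Sym2 V)} (hM : IsPMOn G S M) (hL : IsPMOn G A L)
    (hLM : L ⊆ M) (hLE : L ⊆ Es) : MatchesExactly M Es A := by
  intro v hv
  obtain ⟨e, ⟨he, hve⟩, -⟩ := hL.2.2 v hv
  exact ⟨e, ⟨hLM he, hLE he, hve⟩, fun f hf ↦ hM.eq_of_mem hf.1 (hLM he) hf.2.2 hve⟩

theorem IsPMOn.walkMConfOn (hM : IsPMOn G S M) (hL : IsPMOn G A L) (hLM : L ⊆ M)
    {P : G.Walk u v} (hLP : ∀ e ∈ L, e ∈ P.edges) : WalkMConfOn G M P A := by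
  have hmatch : MatchesExactly M {e | e ∈ P.edges ∧ ∀ y ∈ e, y ∈ A} A :=
    hM.matchesExactly hL hLM fun e he ↦ ⟨hLP e he, hL.2.1 e he⟩
  simpa only [WalkMConfOn, MatchesExactly, Set.mem_ofPred_eq, and_assoc] using hmatch

theorem internallyMConformal_iff_diff {P : G.Walk u v} :
    InternallyMConformal G M P ↔ WalkMConfOn G M P ({x | x ∈ P.support} \ {u, v}) := by
  simp [InternallyMConformal, WalkMConfOn]

end PerfectMatching

section Path

variable {G : SimpleGraph V} {V1 V2 : Set V} {u v : V}

theorem IsBipartitionOf.mem_right_iff (h : IsBipartitionOf G V1 V2) : v ∈ V2 ↔ v ∉ V1 :=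
  ⟨fun h2 h1 ↦ Set.disjoint_left.1 h.1 h1 h2,
    (h.2.1 ▸ Set.mem_univ v : v ∈ V1 ∪ V2).resolve_left⟩

open Classical in
theorem IsBipartitionOf.even_length_iff (h : IsBipartitionOf G V1 V2) (P : G.Walk u v) :
    Even P.length ↔ (u ∈ V1 ↔ v ∈ V1) := by
  let colouring : G.Coloring Bool := .mk (fun x ↦ decide (x ∈ V1)) fun {x y} hxy ↦ by
    have := h.2.2 hxy
    rw [h.mem_right_iff] at this
    simp [this]
  simpa [colouring, Coloring.mk] using colouring.even_length_iff_congr P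

theorem exists_isPMOn_support_diff_end (P : G.Walk u v) (hP : P.IsPath) (hlen : Even P.length) :
    ∃ L : Set (Sym2 V), (∀ e ∈ L, e ∈ P.edges) ∧ IsPMOn G ({x | x ∈ P.support} \ {v}) L := by
  induction hn : P.length using Nat.strong_induction_on generalizing u with
  | _ n ih =>
  match P, hP, hlen, hn with
  | .nil, _, _, _ => exact ⟨∅, by simp, by simpa using isPMOn_empty⟩
  | .cons h .nil, _, hlen, _ => simp at hlen
  | .cons (v := w) h (.cons (v := x) h' P), hP, hlen, hn =>
    simp only [Walk.cons_isPath_iff, Walk.support_cons, List.mem_cons, not_or] at hP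
    obtain ⟨⟨hP, hwP⟩, -, huP⟩ := hP
    have hlen' : Even P.length := by simpa [Nat.even_add_one] using hlen
    obtain ⟨L, hLP, hL⟩ := ih P.length (by simp [← hn]) P hP hlen' rfl
    have hdisj : Disjoint {u, w} ({x | x ∈ P.support} \ {v}) := by
      grind
    refine ⟨{s(u, w)} ∪ L, by grind [Walk.edges_cons], ?_⟩
    have hv := P.end_mem_support
    convert (isPMOn_pair h).union hL hdisj using 1
    grind [Walk.support_cons]

theorem exists_isPMOn_support_diff_start (P : G.Walk u v) (hP : P.IsPath)
    (hlen : Even P.length) :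
    ∃ L : Set (Sym2 V), (∀ e ∈ L, e ∈ P.edges) ∧ IsPMOn G ({x | x ∈ P.support} \ {u}) L := by
  simpa using exists_isPMOn_support_diff_end P.reverse hP.reverse (by simpa using hlen)

theorem exists_isPMOn_interior (P : G.Walk u v) (hP : P.IsPath) (hlen : Odd P.length) :
    ∃ L : Set (Sym2 V), (∀ e ∈ L, e ∈ P.edges) ∧
      IsPMOn G ({x | x ∈ P.support} \ {u, v}) L := by
  cases P with
  | nil => simp at hlen
  | cons h P =>
    rw [Walk.cons_isPath_iff] at hP
    obtain ⟨L, hLP, hL⟩ := exists_isPMOn_support_diff_end P hP.1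
      (by simpa [Nat.odd_add_one] using hlen)
    refine ⟨L, fun e he ↦ by simp [hLP e he], ?_⟩
    convert hL using 1
    grind [Walk.support_cons]

theorem exists_isPath_support_eq_map_append {H : SimpleGraph W} (f : G ↪g H) {z : W}
    {P : G.Walk u v} (hP : P.IsPath) (hz : z ∉ Set.range f) (hadj : H.Adj (f v) z) :
    ∃ Q : H.Walk (f u) z, Q.IsPath ∧ Q.support = P.support.map f ++ [z] := by
  have hzP : z ∉ (P.map f.toHom).support := by
    rw [Walk.support_map, List.mem_map]
    rintro ⟨x, -, rfl⟩
    exact hz ⟨x, rfl⟩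
  refine ⟨_, (hP.map f.injective).concat hzP hadj, ?_⟩
  rw [Walk.support_concat, Walk.support_map]
  rfl

theorem exists_isPath_map_support_append_eq {H : SimpleGraph W} (f : G ↪g H) {z : W}
    (P : H.Walk (f u) z) (hP : P.IsPath) (hz : z ∉ Set.range f)
    (hrange : ∀ x ∈ P.support, x ≠ z → x ∈ Set.range f) :
    ∃ (w : V) (P' : G.Walk u w), P'.IsPath ∧ H.Adj (f w) z ∧
      P.support = P'.support.map f ++ [z] := by
  generalize hx : f u = x at P
  induction P generalizing u with
  | nil => exact absurd ⟨u, hx⟩ hz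
  | @cons x y z h P ih =>
    subst hx
    rw [Walk.cons_isPath_iff] at hP
    by_cases hyz : y = z
    · subst hyz
      obtain rfl := (Walk.isPath_iff_nil.1 hP.1).eq_nil
      exact ⟨u, .nil, .nil, h, rfl⟩
    · obtain ⟨v, rfl⟩ := hrange y (by simp) hyz
      obtain ⟨w, P', hP', hadj, hsupp⟩ := ih hz rfl hP.1
        (fun x hx hxz ↦ hrange x (by simp [hx]) hxz)
      refine ⟨w, .cons (f.map_adj_iff.1 h) P', ?_, hadj, by simp [hsupp]⟩
      exact (Walk.cons_isPath_iff _ _).2 ⟨hP', fun hu ↦ hP.2 (by simp [hsupp, hu])⟩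

end Path

section Linkage

variable {G : SimpleGraph V}

/-- There are vertex-disjoint paths from `s1` to `t1` and from `s2` to `t2` whose removal leaves a
graph with a perfect matching. This condition mediates between 2-MLP and conformal crosses; it is
phrased through a perfect matching on the complementary vertex set rather than through an induced
subgraph. -/
def HasConformalLinkage (G : SimpleGraph V) (s1 t1 s2 t2 : V) : Prop :=
  ∃ (P1 : G.Walk s1 t1) (P2 : G.Walk s2 t2), P1.IsPath ∧ P2.IsPath ∧
    (∀ x ∈ P1.support, x ∉ P2.support) ∧
    ∃ M, IsPMOn G ({x | x ∈ P1.support} ∪ {x | x ∈ P2.support})ᶜ M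

variable {s1 t1 s2 t2 : V}

theorem HasConformalLinkage.fst_end_ne_snd_start (h : HasConformalLinkage G s1 t1 s2 t2) :
    t1 ≠ s2 := by
  obtain ⟨P1, P2, -, -, hdisj, -⟩ := h
  exact fun h ↦ hdisj t1 P1.end_mem_support (h ▸ P2.start_mem_support)

theorem HasConformalLinkage.swap (h : HasConformalLinkage G s1 t1 s2 t2) :
    HasConformalLinkage G s2 t2 s1 t1 := by
  obtain ⟨P1, P2, hP1, hP2, hdisj, M, hM⟩ := h
  exact ⟨P2, P1, hP2, hP1, fun x h2 h1 ↦ hdisj x h1 h2, M, by simpa only [Set.union_comm] using hM⟩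

theorem HasConformalLinkage.reverse_left (h : HasConformalLinkage G s1 t1 s2 t2) :
    HasConformalLinkage G t1 s1 s2 t2 := by
  obtain ⟨P1, P2, hP1, hP2, hdisj, M, hM⟩ := h
  exact ⟨P1.reverse, P2, hP1.reverse, hP2, by simpa using hdisj, M, by simpa using hM⟩

theorem HasConformalLinkage.of_sym2_eq {u1 v1 u2 v2 : V} (h : HasConformalLinkage G s1 t1 s2 t2)
    (h1 : s(s1, t1) = s(u1, v1)) (h2 : s(s2, t2) = s(u2, v2)) :
    HasConformalLinkage G u1 v1 u2 v2 := by
  rcases Sym2.eq_iff.1 h1 with ⟨rfl, rfl⟩ | ⟨rfl, rfl⟩ <;>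
    rcases Sym2.eq_iff.1 h2 with ⟨rfl, rfl⟩ | ⟨rfl, rfl⟩
  · exact h
  · exact h.swap.reverse_left.swap
  · exact h.reverse_left
  · exact h.reverse_left.swap.reverse_left.swap

theorem TwoMLPInstanceOn.hasConformalLinkage {a1 a2 b1 b2 : V}
    (h : TwoMLPInstanceOn G Set.univ a1 a2 b1 b2 {s(a1, b2), s(a2, b1)}) :
    HasConformalLinkage G a1 b1 a2 b2 := by
  obtain ⟨M, hM, hFM, P1, P2, hP1, hP2, hM1, hM2, hdisj⟩ := h
  let T : Set V := {x | x ∈ P1.support ∨ x ∈ P2.support}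
  have hab : s(a1, b2) ∈ M := hFM (by simp)
  have hba : s(a2, b1) ∈ M := hFM (by simp)
  have hinner {u v : V} {P : G.Walk u v} (hP : InternallyMConformal G M P)
      (hPT : ∀ x ∈ P.support, x ∈ T) {x : V} (hx : x ∈ P.support) (hxu : x ≠ u) (hxv : x ≠ v) :
      ∃ e ∈ M, x ∈ e ∧ ∀ y ∈ e, y ∈ T := by
    obtain ⟨e, ⟨he, -, heP, hxe⟩, -⟩ := hP x ⟨hx, hxu, hxv⟩
    exact ⟨e, he, hxe, fun y hy ↦ hPT y (heP y hy).1⟩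
  have hT : ∀ x ∈ T, ∃ e ∈ M, x ∈ e ∧ ∀ y ∈ e, y ∈ T := by
    intro x hx
    by_cases hx12 : x = a1 ∨ x = b2
    · exact ⟨_, hab, by simpa using hx12, by simp [T]⟩
    by_cases hx21 : x = a2 ∨ x = b1
    · exact ⟨_, hba, by simpa using hx21, by simp [T]⟩
    push Not at hx12 hx21
    rcases hx with hx | hx
    · exact hinner hM1 (fun _ ↦ Or.inl) hx hx12.1 hx21.2
    · exact hinner hM2 (fun _ ↦ Or.inr) hx hx21.1 hx12.2
  refine ⟨P1, P2, hP1, hP2, hdisj, {e ∈ M | ∀ v ∈ e, v ∉ T}, ?_⟩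
  exact Set.compl_eq_univ_sdiff T ▸ hM.diff hT

theorem HasConformalLinkage.twoMLPInstanceOn {V1 V2 : Set V} {a1 a2 b1 b2 : V}
    (hbip : IsBipartitionOf G V1 V2) (ha1 : a1 ∈ V1) (ha2 : a2 ∈ V1) (h12 : G.Adj a1 b2)
    (h21 : G.Adj a2 b1) (h : HasConformalLinkage G a1 b1 a2 b2) :
    TwoMLPInstanceOn G Set.univ a1 a2 b1 b2 {s(a1, b2), s(a2, b1)} := by
  obtain ⟨P1, P2, hP1, hP2, hdisj, M0, hM0⟩ := h
  have hb1 : b1 ∉ V1 := hbip.mem_right_iff.1 ((hbip.2.2 h21).1 ha2)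
  have hb2 : b2 ∉ V1 := hbip.mem_right_iff.1 ((hbip.2.2 h12).1 ha1)
  obtain ⟨L1, hL1P, hL1⟩ := exists_isPMOn_interior P1 hP1 (by
    simp [← Nat.not_even_iff_odd, hbip.even_length_iff, ha1, hb1])
  obtain ⟨L2, hL2P, hL2⟩ := exists_isPMOn_interior P2 hP2 (by
    simp [← Nat.not_even_iff_odd, hbip.even_length_iff, ha2, hb2])
  have hL := hL1.union_of_diff_pair hL2 h12 h21 P1.start_mem_support P1.end_mem_support
    P2.start_mem_support P2.end_mem_support (Set.disjoint_left.2 hdisj)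
    (fun h ↦ hb1 (h ▸ ha1)) (fun h ↦ hb2 (h ▸ ha2))
  have hM := hM0.union_compl hL
  exact ⟨_, hM, by grind, P1, P2, hP1, hP2,
    internallyMConformal_iff_diff.2 (hM.walkMConfOn hL1 (by grind) hL1P),
    internallyMConformal_iff_diff.2 (hM.walkMConfOn hL2 (by grind) hL2P), hdisj⟩

end Linkage

section FourCycle

variable {G : SimpleGraph V} {p q r s : V}

/-- The closed walk `s p q r s`, the cycle over which crosses are constructed. -/
def fourCycle (hsp : G.Adj s p) (hpq : G.Adj p q) (hqr : G.Adj q r) (hrs : G.Adj r s) :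
    G.Walk s s :=
  .cons hsp (.cons hpq (.cons hqr (.cons hrs .nil)))

theorem support_tail_eq_or_of_isCycle (hnd : [p, q, r, s].Nodup) {C : G.Walk s s} (hC : C.IsCycle)
    (hE : {e | e ∈ C.edges} = ({s(p, s), s(s, r), s(r, q), s(q, p)} : Set (Sym2 V))) :
    C.support.tail = [p, q, r, s] ∨ C.support.tail = [r, q, p, s] := by
  classical
  have hlen : C.length = 4 := by
    have hE' : C.edges.toFinset = {s(p, s), s(s, r), s(r, q), s(q, p)} := by
      ext e
      simpa using Set.ext_iff.1 hE e
    rw [← Walk.length_edges, ← List.toFinset_card_of_nodup hC.edges_nodup, hE']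
    grind
  have hsupp := hC.support_nodup
  match C, hlen with
  | .cons (v := x) _ (.cons (v := y) _ (.cons (v := z) _ (.cons _ .nil))), _ =>
    simp only [Walk.support_cons, Walk.support_nil, List.tail_cons] at hsupp ⊢
    have hx : s(s, x) ∈ ({s(p, s), s(s, r), s(r, q), s(q, p)} : Set (Sym2 V)) := by simp [← hE]
    have hy : s(x, y) ∈ ({s(p, s), s(s, r), s(r, q), s(q, p)} : Set (Sym2 V)) := by simp [← hE]
    have hz : s(z, s) ∈ ({s(p, s), s(s, r), s(r, q), s(q, p)} : Set (Sym2 V)) := by simp [← hE]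
    simp only [Set.mem_insert_iff, Set.mem_singleton_iff, Sym2.eq_iff] at hx hy hz
    grind

theorem diagonals_of_sublist_rotate {s1 s2 t1 t2 : V} {n : ℕ}
    (h : List.Sublist [s1, s2, t1, t2] ([p, q, r, s].rotate n)) :
    s(s1, t1) = s(p, r) ∧ s(s2, t2) = s(q, s) ∨ s(s1, t1) = s(q, s) ∧ s(s2, t2) = s(p, r) := by
  have heq := h.eq_of_length (by simp)
  rw [← List.rotate_mod] at heq
  have hn : n % [p, q, r, s].length < 4 := Nat.mod_lt _ (by simp)
  interval_cases n % [p, q, r, s].length <;> simp_all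

theorem InCyclicOrder.diagonals {C : G.Walk s s} (hC : C.support.tail = [p, q, r, s])
    {s1 s2 t1 t2 : V} (h : InCyclicOrder G C s1 s2 t1 t2) :
    s(s1, t1) = s(p, r) ∧ s(s2, t2) = s(q, s) ∨ s(s1, t1) = s(q, s) ∧ s(s2, t2) = s(p, r) := by
  obtain ⟨n, h | h⟩ := h <;> rw [hC] at h
  · exact diagonals_of_sublist_rotate h
  · have := diagonals_of_sublist_rotate (p := s) (q := r) (r := q) (s := p) (by simpa using h)
    grind

theorem HasConformalCross.hasConformalLinkage {C : G.Walk s s}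
    (hC : C.support.tail = [p, q, r, s]) (h : HasConformalCross G C) :
    HasConformalLinkage G p r q s := by
  obtain ⟨-, s1, t1, s2, t2, P1, P2, ⟨-, -, horder, hP1, hP2, -, -, hdisj, -, -⟩, N, hN, hNE⟩ := h
  have hdiag := horder.diagonals hC
  have hsupp : ∀ x ∈ C.support, x ∈ P1.support ∨ x ∈ P2.support := by
    have hends : ∀ x, x ∈ s(s1, t1) ∨ x ∈ s(s2, t2) → x ∈ P1.support ∨ x ∈ P2.support := by
      grind [P1.start_mem_support, P1.end_mem_support, P2.start_mem_support, P2.end_mem_support]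
    intro x hx
    rw [← Walk.cons_tail_support, hC] at hx
    grind
  let T : Set V := {x | x ∈ P1.support ∨ x ∈ P2.support}
  have hT : ∀ x ∈ T, ∃ e ∈ N, x ∈ e ∧ ∀ y ∈ e, y ∈ T := by
    intro x hx
    obtain ⟨e, ⟨he, heE, hxe⟩, -⟩ := hNE x (by grind)
    refine ⟨e, he, hxe, fun y hy ↦ ?_⟩
    rcases heE with (heC | heP) | heP
    · exact hsupp y (Walk.mem_support_of_mem_edges heC hy)
    · exact Or.inl (Walk.mem_support_of_mem_edges heP hy)
    · exact Or.inr (Walk.mem_support_of_mem_edges heP hy)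
  have hlink : HasConformalLinkage G s1 t1 s2 t2 := by
    refine ⟨P1, P2, hP1, hP2, hdisj, {e ∈ N | ∀ v ∈ e, v ∉ T}, ?_⟩
    exact Set.compl_eq_univ_sdiff T ▸ hN.diff hT
  rcases hdiag with ⟨h1, h2⟩ | ⟨h1, h2⟩
  · exact hlink.of_sym2_eq h1 h2
  · exact hlink.swap.of_sym2_eq h2 h1

theorem HasConformalLinkage.hasConformalCross (hG : IsBipartite G) (hsp : G.Adj s p)
    (hpq : G.Adj p q) (hqr : G.Adj q r) (hrs : G.Adj r s) (hpr : p ≠ r) (hqs : q ≠ s)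
    (h : HasConformalLinkage G p r q s) :
    HasConformalCross G (fourCycle hsp hpq hqr hrs) := by
  obtain ⟨V1, V2, hbip⟩ := hG
  obtain ⟨P1, P2, hP1, hP2, hdisj, M0, hM0⟩ := h
  have hadj {x y : V} (hxy : G.Adj x y) : x ∈ V1 ↔ y ∉ V1 := by
    rw [hbip.2.2 hxy, hbip.mem_right_iff]
  obtain ⟨L1, hL1P, hL1⟩ := exists_isPMOn_support_diff_start P1 hP1 (by
    rw [hbip.even_length_iff, hadj hpq, hadj hqr, not_not])
  obtain ⟨L2, hL2P, hL2⟩ := exists_isPMOn_support_diff_start P2 hP2 (by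
    rw [hbip.even_length_iff, hadj hqr, hadj hrs, not_not])
  have hpP := P1.start_mem_support
  have hrP := P1.end_mem_support
  have hqP := P2.start_mem_support
  have hsP := P2.end_mem_support
  have hL := hL1.union_of_diff_singleton hL2 hpq hpP hqP (Set.disjoint_left.2 hdisj)
  have hN := hM0.union_compl hL
  have hC : ∀ x, x ∈ (fourCycle hsp hpq hqr hrs).support ↔ x = p ∨ x = r ∨ x = q ∨ x = s := by
    grind [fourCycle, Walk.support_cons, Walk.support_nil]
  have hverts : {x | x ∈ (fourCycle hsp hpq hqr hrs).support} ∪ {x | x ∈ P1.support} ∪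
      {x | x ∈ P2.support} = {x | x ∈ P1.support} ∪ {x | x ∈ P2.support} := by
    grind
  have hedges : L1 ∪ L2 ∪ {s(p, q)} ⊆ {e | e ∈ (fourCycle hsp hpq hqr hrs).edges} ∪
      {e | e ∈ P1.edges} ∪ {e | e ∈ P2.edges} := by
    rintro e ((he | he) | rfl)
    · exact Or.inl (Or.inr (hL1P e he))
    · exact Or.inr (hL2P e he)
    · exact Or.inl (Or.inl (by simp [fourCycle]))
  refine ⟨_, p, r, q, s, P1, P2, ⟨hN, by grind, ⟨0, by simp [fourCycle]⟩, hP1, hP2,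
    ⟨{p}, by simp, hN.walkMConfOn hL1 (by grind) hL1P⟩,
    ⟨{q}, by simp, hN.walkMConfOn hL2 (by grind) hL2P⟩, hdisj, by grind, by grind⟩,
    _, hN, hverts ▸ hN.matchesExactly hL (by grind) hedges⟩

theorem fourCycle_isCycle (hsp : G.Adj s p) (hpq : G.Adj p q) (hqr : G.Adj q r) (hrs : G.Adj r s)
    (hpr : p ≠ r) (hqs : q ≠ s) : (fourCycle hsp hpq hqr hrs).IsCycle := by
  have hpath : (Walk.cons hpq (.cons hqr (.cons hrs .nil))).IsPath := by
    rw [Walk.isPath_def]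
    grind [hsp.ne, hpq.ne, hqr.ne, hrs.ne, Walk.support_cons, Walk.support_nil]
  refine (Walk.cons_isCycle_iff _ hsp).2 ⟨hpath, ?_⟩
  grind [hsp.ne, hrs.ne, Walk.edges_cons, Walk.edges_nil]

theorem exists_isCycle_hasConformalCross_iff (hG : IsBipartite G) (hsp : G.Adj s p)
    (hpq : G.Adj p q) (hqr : G.Adj q r) (hrs : G.Adj r s) (hpr : p ≠ r) (hqs : q ≠ s) :
    (∃ C : G.Walk s s, C.IsCycle ∧
        {e | e ∈ C.edges} = ({s(p, s), s(s, r), s(r, q), s(q, p)} : Set (Sym2 V)) ∧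
        HasConformalCross G C) ↔
      HasConformalLinkage G p r q s := by
  constructor
  · rintro ⟨C, hC, hE, hcross⟩
    have hnd : [p, q, r, s].Nodup := by grind [hsp.ne, hpq.ne, hqr.ne, hrs.ne]
    rcases support_tail_eq_or_of_isCycle hnd hC hE with hsupp | hsupp
    · exact hcross.hasConformalLinkage hsupp
    · exact (hcross.hasConformalLinkage hsupp).reverse_left
  · intro h
    refine ⟨fourCycle hsp hpq hqr hrs, fourCycle_isCycle hsp hpq hqr hrs hpr hqs, ?_,
      h.hasConformalCross hG hsp hpq hqr hrs hpr hqs⟩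
    ext e
    grind [fourCycle, Walk.edges_cons, Walk.edges_nil]

end FourCycle

section Extension

variable {G : SimpleGraph V} {H : SimpleGraph W} {s1 t1 s2 t2 : V} {z1 z2 : W}

theorem HasConformalLinkage.map_concat (h : HasConformalLinkage G s1 t1 s2 t2) (f : G ↪g H)
    (hrange : ∀ x, x ∈ Set.range f ↔ x ≠ z1 ∧ x ≠ z2) (hz : z1 ≠ z2) (h1 : H.Adj (f t1) z1)
    (h2 : H.Adj (f t2) z2) : HasConformalLinkage H (f s1) z1 (f s2) z2 := by
  obtain ⟨P1, P2, hP1, hP2, hdisj, M, hM⟩ := h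
  obtain ⟨Q1, hQ1, hPQ1⟩ := exists_isPath_support_eq_map_append f hP1 (by simp [hrange]) h1
  obtain ⟨Q2, hQ2, hPQ2⟩ := exists_isPath_support_eq_map_append f hP2 (by simp [hrange]) h2
  have hne : ∀ y, f y ≠ z1 ∧ f y ≠ z2 := fun y ↦ (hrange _).1 ⟨y, rfl⟩
  refine ⟨Q1, Q2, hQ1, hQ2, by grind [f.injective], Sym2.map f.toHom '' M, ?_⟩
  convert hM.map f.toHom f.injective using 1
  ext x
  change _ ↔ x ∈ f '' _
  grind [hrange x, f.injective]

theorem HasConformalLinkage.exists_comap (f : G ↪g H)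
    (hrange : ∀ x, x ∈ Set.range f ↔ x ≠ z1 ∧ x ≠ z2)
    (h : HasConformalLinkage H (f s1) z1 (f s2) z2) :
    ∃ t1 t2, H.Adj (f t1) z1 ∧ H.Adj (f t2) z2 ∧ HasConformalLinkage G s1 t1 s2 t2 := by
  obtain ⟨P1, P2, hP1, hP2, hdisj, M, hM⟩ := h
  have hz1 : z1 ∉ Set.range f := by simp [hrange]
  have hz2 : z2 ∉ Set.range f := by simp [hrange]
  have hz1P := P1.end_mem_support
  have hz2P := P2.end_mem_support
  obtain ⟨t1, Q1, hQ1, ht1, hPQ1⟩ := exists_isPath_map_support_append_eq f P1 hP1 hz1 (by grind)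
  obtain ⟨t2, Q2, hQ2, ht2, hPQ2⟩ := exists_isPath_map_support_append_eq f P2 hP2 hz2 (by grind)
  refine ⟨t1, t2, ht1, ht2, Q1, Q2, hQ1, hQ2, fun x hx1 hx2 ↦ ?_, _, IsPMOn.comap f (N := M) ?_⟩
  · exact hdisj (f x) (by simp [hPQ1, hx1]) (by simp [hPQ2, hx2])
  · convert hM using 1
    ext x
    grind [hrange x, f.injective]

end Extension

section PlusXY

variable {B : SimpleGraph V} {V1 V2 : Set V} {a1 a2 b1 b2 u v : V}

theorem plusXY_adj_inl_inl :
    (plusXY B a1 a2 b1 b2).Adj (Sum.inl u) (Sum.inl v) ↔ B.Adj u v := by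
  simp only [plusXY, fromRel_adj]
  grind [B.ne_of_adj, B.adj_comm]

theorem plusXY_adj_inl_inr_zero :
    (plusXY B a1 a2 b1 b2).Adj (Sum.inl v) (Sum.inr 0) ↔ v = b1 ∨ v = b2 := by
  simp [plusXY]

theorem plusXY_adj_inl_inr_one :
    (plusXY B a1 a2 b1 b2).Adj (Sum.inl v) (Sum.inr 1) ↔ v = a1 ∨ v = a2 := by
  simp [plusXY]

theorem plusXY_adj_inr_zero_inr_one :
    (plusXY B a1 a2 b1 b2).Adj (Sum.inr 0) (Sum.inr 1) := by
  simp [plusXY]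

variable (B a1 a2 b1 b2) in
/-- `B` as the induced subgraph of `plusXY B a1 a2 b1 b2` on the old vertices. -/
def inlEmbedding : B ↪g plusXY B a1 a2 b1 b2 where
  toFun := Sum.inl
  inj' := Sum.inl_injective
  map_rel_iff' := plusXY_adj_inl_inl

theorem mem_range_inlEmbedding (x : V ⊕ Fin 2) :
    x ∈ Set.range (inlEmbedding B a1 a2 b1 b2) ↔ x ≠ Sum.inr 0 ∧ x ≠ Sum.inr 1 := by
  rcases x with x | i
  · simp [inlEmbedding]
  · fin_cases i <;> simp [inlEmbedding]

theorem IsBipartitionOf.plusXY (hbip : IsBipartitionOf B V1 V2) (ha1 : a1 ∈ V1) (ha2 : a2 ∈ V1)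
    (hb1 : b1 ∈ V2) (hb2 : b2 ∈ V2) :
    IsBipartitionOf (plusXY B a1 a2 b1 b2) (insert (Sum.inr 0) (Sum.inl '' V1))
      (insert (Sum.inr 1) (Sum.inl '' V2)) := by
  obtain ⟨hdisj, hunion, hadj⟩ := hbip
  rw [Set.disjoint_left] at hdisj
  refine ⟨?_, ?_, ?_⟩
  · simp only [Set.disjoint_left]
    grind
  · ext (x | i)
    · simpa using Set.ext_iff.1 hunion x
    · fin_cases i <;> simp
  · rintro (x | i) (y | j) hxy
    · simpa using hadj (plusXY_adj_inl_inl.1 hxy)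
    · fin_cases j <;> grind [plusXY_adj_inl_inr_zero, plusXY_adj_inl_inr_one]
    · fin_cases i <;>
        grind [plusXY_adj_inl_inr_zero, plusXY_adj_inl_inr_one, SimpleGraph.adj_comm]
    · fin_cases i <;> fin_cases j <;> simp at hxy ⊢

theorem hasConformalLinkage_plusXY_iff :
    HasConformalLinkage (plusXY B a1 a2 b1 b2) (Sum.inl a1) (Sum.inr 0) (Sum.inl b2) (Sum.inr 1) ↔
      HasConformalLinkage B a1 b1 a2 b2 := by
  constructor
  · intro h
    obtain ⟨t1, t2, ht1, ht2, hB⟩ :=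
      h.exists_comap (inlEmbedding B a1 a2 b1 b2) mem_range_inlEmbedding
    obtain rfl := (plusXY_adj_inl_inr_zero.1 ht1).resolve_right hB.fst_end_ne_snd_start
    obtain rfl := (plusXY_adj_inl_inr_one.1 ht2).resolve_left hB.swap.fst_end_ne_snd_start
    exact hB.of_sym2_eq rfl Sym2.eq_swap
  · intro h
    exact (h.of_sym2_eq rfl Sym2.eq_swap).map_concat (inlEmbedding B a1 a2 b1 b2)
      mem_range_inlEmbedding (by simp) (plusXY_adj_inl_inr_zero.2 (Or.inl rfl))
      (plusXY_adj_inl_inr_one.2 (Or.inr rfl))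

end PlusXY

theorem statement_12_general {V : Type*} (B : SimpleGraph V) (V1 V2 : Set V)
    (hbip : IsBipartitionOf B V1 V2) (a1 a2 b1 b2 : V) (ha1 : a1 ∈ V1) (ha2 : a2 ∈ V1)
    (h12 : B.Adj a1 b2) (h21 : B.Adj a2 b1) :
    TwoMLPInstanceOn B Set.univ a1 a2 b1 b2 {s(a1, b2), s(a2, b1)} ↔
      ∃ C : (plusXY B a1 a2 b1 b2).Walk (Sum.inr 1) (Sum.inr 1), C.IsCycle ∧
        {e | e ∈ C.edges} =
          ({s(Sum.inl a1, Sum.inr 1), s(Sum.inr 1, Sum.inr 0), s(Sum.inr 0, Sum.inl b2),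
            s(Sum.inl b2, Sum.inl a1)} : Set (Sym2 (V ⊕ Fin 2))) ∧
        HasConformalCross (plusXY B a1 a2 b1 b2) C := by
  have hb1 : b1 ∈ V2 := (hbip.2.2 h21).1 ha2
  have hb2 : b2 ∈ V2 := (hbip.2.2 h12).1 ha1
  calc
    _ ↔ HasConformalLinkage B a1 b1 a2 b2 :=
      ⟨fun h ↦ h.hasConformalLinkage, fun h ↦ h.twoMLPInstanceOn hbip ha1 ha2 h12 h21⟩
    _ ↔ HasConformalLinkage (plusXY B a1 a2 b1 b2)
          (Sum.inl a1) (Sum.inr 0) (Sum.inl b2) (Sum.inr 1) :=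
      hasConformalLinkage_plusXY_iff.symm
    _ ↔ _ :=
      (exists_isCycle_hasConformalCross_iff ⟨_, _, hbip.plusXY ha1 ha2 hb1 hb2⟩
        (plusXY_adj_inl_inr_one.2 (Or.inl rfl)).symm (plusXY_adj_inl_inl.2 h12)
        (plusXY_adj_inl_inr_zero.2 (Or.inr rfl)) plusXY_adj_inr_zero_inr_one
        (by simp) (by simp)).symm

/-- a size-two extendible cover instance of 2-MLP is equivalent to the
existence of a conformal cross over the 4-cycle `a1 y x b2` in `B⁺`. -/
theorem statement_12 {V : Type*} [Fintype V] [DecidableEq V] (B : SimpleGraph V)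
    (V1 V2 : Set V) (hbip : IsBipartitionOf B V1 V2) (hpm : ∃ M, IsPM B M)
    (a1 a2 b1 b2 : V)
    (ha1 : a1 ∈ V1) (ha2 : a2 ∈ V1) (hb1 : b1 ∈ V2) (hb2 : b2 ∈ V2)
    (hdist : [a1, a2, b1, b2].Nodup)
    (hcover : IsSCover B {a1, a2, b1, b2} ({s(a1, b2), s(a2, b1)} : Set (Sym2 V)))
    (hext : Extendible B ({s(a1, b2), s(a2, b1)} : Set (Sym2 V))) :
    TwoMLPInstanceOn B Set.univ a1 a2 b1 b2 {s(a1, b2), s(a2, b1)} ↔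
      ∃ C : (plusXY B a1 a2 b1 b2).Walk (Sum.inr 1) (Sum.inr 1), C.IsCycle ∧
        {e | e ∈ C.edges} =
          ({s(Sum.inl a1, Sum.inr 1), s(Sum.inr 1, Sum.inr 0), s(Sum.inr 0, Sum.inl b2),
            s(Sum.inl b2, Sum.inl a1)} : Set (Sym2 (V ⊕ Fin 2))) ∧
        HasConformalCross (plusXY B a1 a2 b1 b2) C :=
  statement_12_general B V1 V2 hbip a1 a2 b1 b2 ha1 ha2 (hcover.1 (Or.inl rfl))
    (hcover.1 (Or.inr rfl))

end Paper
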